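/- Let κ ∈ {2, 3, 4, …} and let η be a real random variable with E|η|^κ < ∞. Fix reals α₁, …, α_p, ω > 0 and β_{1+}, …, β_{p+}, β_{1−}, …, β_{p−} ≥ 0; set δ_i = max{ |α_i + β_{i+} η| , |α_i − β_{i−} η| } and a_i = E[ δ_i ( Σ_{j=1}^p δ_j )^{κ−1} ] for 1 ≤ i ≤ p. Then for every ε > 0 there exists L > 0 such that for all x = (x₁, …, x_p) ∈ ℝ^p with ‖x‖_κ > L, E[ ( Σ_{i=1}^p δ_i |x_i| + ω |η| )^κ ] ≤ Σ_{i=1}^p a_i |x_i|^κ + ε ‖x‖_κ^κ. -/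

import Mathlib

open MeasureTheory

/-- Weighted power-mean inequality without normalisation. -/
lemma helper_jensen {p : ℕ} (κ : ℕ) (hκ : 2 ≤ κ) (d y : Fin p → ℝ) (hd : ∀ i, 0 ≤ d i)
    (hy : ∀ i, 0 ≤ y i) :
    (∑ i, d i * y i) ^ κ ≤ ∑ i, (d i * (∑ j, d j) ^ (κ - 1)) * y i ^ κ := by
  obtain ⟨n, rfl⟩ : ∃ n, κ = n + 1 := ⟨κ - 1, by omega⟩
  have hS : 0 ≤ ∑ j, d j := Finset.sum_nonneg fun i _ => hd i
  rcases hS.eq_or_lt with h0 | hpos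
  · have hz : ∀ i, d i = 0 := fun i =>
      (Finset.sum_eq_zero_iff_of_nonneg (fun i _ => hd i)).1 h0.symm i (Finset.mem_univ i)
    simp [hz]
  · set S := ∑ j, d j with hSdef
    have h := Real.pow_arith_mean_le_arith_mean_pow Finset.univ (fun i => d i / S) y
      (fun i _ => div_nonneg (hd i) hS) (by rw [← Finset.sum_div]; exact div_self hpos.ne')
      (fun i _ => hy i) (n + 1)
    have e1 : ∑ i, d i * y i = S * ∑ i, d i / S * y i := by
      rw [Finset.mul_sum]
      refine Finset.sum_congr rfl fun i _ => ?_
      field_simp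
    have e2 : ∑ i, (d i * S ^ (n + 1 - 1)) * y i ^ (n + 1)
        = S ^ (n + 1) * ∑ i, d i / S * y i ^ (n + 1) := by
      rw [Finset.mul_sum]
      refine Finset.sum_congr rfl fun i _ => ?_
      simp only [Nat.add_sub_cancel]
      field_simp
      ring
    rw [e1, e2, mul_pow]
    exact mul_le_mul_of_nonneg_left h (by positivity)

/-- Tangent-line type bound. -/
lemma helper_pow (n : ℕ) (a b : ℝ) (ha : 0 ≤ a) (hb : 0 ≤ b) :
    (a + b) ^ (n + 1) ≤ a ^ (n + 1) + (n + 1) * (b * (a + b) ^ n) := by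
  induction n with
  | zero => simp
  | succ n ih =>
    have h1 : a ^ (n + 1) ≤ (a + b) ^ (n + 1) := pow_le_pow_left₀ ha (by linarith) _
    have h2 := mul_le_mul_of_nonneg_left ih ha
    have h3 : a * (b * (a + b) ^ n) ≤ b * (a + b) ^ (n + 1) := by
      have : 0 ≤ b * (a + b) ^ n := by positivity
      calc a * (b * (a + b) ^ n) ≤ (a + b) * (b * (a + b) ^ n) :=
            mul_le_mul_of_nonneg_right (by linarith) this
        _ = _ := by ring
    have h4 : ((n : ℝ) + 1) * (a * (b * (a + b) ^ n)) ≤ (n + 1) * (b * (a + b) ^ (n + 1)) :=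
      mul_le_mul_of_nonneg_left h3 (by positivity)
    have e : (a + b) ^ (n + 1 + 1) = a * (a + b) ^ (n + 1) + b * (a + b) ^ (n + 1) := by ring
    have e' : a ^ (n + 1 + 1) = a * a ^ (n + 1) := by ring
    push_cast
    nlinarith

lemma helper_main {Ω : Type*} [MeasurableSpace Ω] (μ : Measure Ω)
    (κ : ℕ) (hκ : 2 ≤ κ) (p : ℕ) (d : Fin p → Ω → ℝ) (e : Ω → ℝ)
    (hd : ∀ i w, 0 ≤ d i w) (he : ∀ w, 0 ≤ e w)
    (hdm : ∀ i, MemLp (d i) κ μ) (hem : MemLp e κ μ) :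
    ∀ ε > (0 : ℝ), ∃ L > (0 : ℝ), ∀ x : Fin p → ℝ,
      L < (∑ i, |x i| ^ κ) ^ ((1 : ℝ) / κ) →
      ∫ w, ((∑ i, d i w * |x i|) + e w) ^ κ ∂μ ≤
        (∑ i, (∫ w, d i w * (∑ j, d j w) ^ (κ - 1) ∂μ) * |x i| ^ κ)
          + ε * ∑ i, |x i| ^ κ := by
  intro ε hε
  have hκ0 : κ ≠ 0 := by omega
  have hSm : MemLp (fun w => ∑ j, d j w) κ μ := memLp_finset_sum _ fun i _ => hdm i
  have hGm : MemLp (fun w => (∑ j, d j w) + e w) κ μ := hSm.add hem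
  have hS0 : ∀ w, 0 ≤ ∑ j, d j w := fun w => Finset.sum_nonneg fun i _ => hd i w
  have hG0 : ∀ w, 0 ≤ (∑ j, d j w) + e w := fun w => add_nonneg (hS0 w) (he w)
  have hGi : Integrable (fun w => ((∑ j, d j w) + e w) ^ κ) μ := by
    have := hGm.integrable_norm_pow hκ0
    refine this.congr (Filter.Eventually.of_forall fun w => ?_)
    simp only [Real.norm_eq_abs, abs_of_nonneg (hG0 w)]
  obtain ⟨n, rfl⟩ : ∃ n, κ = n + 1 := ⟨κ - 1, by omega⟩
  simp only [Nat.add_sub_cancel]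
  have hai : ∀ i, Integrable (fun w => d i w * (∑ j, d j w) ^ n) μ := by
    intro i
    refine hGi.mono' ((hdm i).1.mul (hSm.1.pow n)) (Filter.Eventually.of_forall fun w => ?_)
    rw [Real.norm_eq_abs, abs_of_nonneg (mul_nonneg (hd i w) (pow_nonneg (hS0 w) n)), pow_succ']
    have h1 : d i w ≤ ∑ j, d j w :=
      Finset.single_le_sum (f := fun j => d j w) (fun j _ => hd j w) (Finset.mem_univ i)
    have h2 := he w
    have h3 := hS0 w
    have h4 := hd i w
    gcongr <;> linarith
  set I := ∫ w, ((∑ j, d j w) + e w) ^ (n + 1) ∂μ with hI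
  have hI0 : 0 ≤ I := integral_nonneg fun w => pow_nonneg (hG0 w) _
  refine ⟨max 1 ((n + 1) * I / ε), by positivity, fun x hx => ?_⟩
  set Q := ∑ i, |x i| ^ (n + 1) with hQ
  have hQ0 : 0 ≤ Q := Finset.sum_nonneg fun i _ => by positivity
  set N := Q ^ ((1 : ℝ) / ((n + 1 : ℕ) : ℝ)) with hN
  have hN1 : 1 < N := lt_of_le_of_lt (le_max_left _ _) hx
  have hN2 : (n + 1) * I / ε < N := lt_of_le_of_lt (le_max_right _ _) hx
  have hNQ : N ^ (n + 1) = Q := by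
    rw [hN, one_div]; exact Real.rpow_inv_natCast_pow hQ0 hκ0
  have hxN : ∀ i, |x i| ≤ N := by
    intro i
    have : |x i| ^ (n + 1) ≤ N ^ (n + 1) := by
      rw [hNQ, hQ]
      exact Finset.single_le_sum (f := fun i => |x i| ^ (n + 1)) (fun j _ => by positivity)
        (Finset.mem_univ i)
    exact le_of_pow_le_pow_left₀ hκ0 (by linarith) this
  have hpt : ∀ w, ((∑ i, d i w * |x i|) + e w) ^ (n + 1) ≤
      (∑ i, (d i w * (∑ j, d j w) ^ n) * |x i| ^ (n + 1))
        + ((n + 1) * N ^ n) * ((∑ j, d j w) + e w) ^ (n + 1) := by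
    intro w
    have hT0 : 0 ≤ ∑ i, d i w * |x i| :=
      Finset.sum_nonneg fun i _ => mul_nonneg (hd i w) (abs_nonneg _)
    have h1 := helper_pow n _ _ hT0 (he w)
    have h2 := helper_jensen (n + 1) hκ (fun i => d i w) (fun i => |x i|) (fun i => hd i w)
      (fun i => abs_nonneg _)
    simp only [Nat.add_sub_cancel] at h2
    have hT : (∑ i, d i w * |x i|) + e w ≤ N * ((∑ j, d j w) + e w) := by
      rw [mul_add, Finset.mul_sum]
      refine add_le_add (Finset.sum_le_sum fun i _ => ?_) ?_
      · rw [mul_comm]; exact mul_le_mul_of_nonneg_right (hxN i) (hd i w)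
      · nlinarith [he w]
    have h3 : e w * ((∑ i, d i w * |x i|) + e w) ^ n
        ≤ ((∑ j, d j w) + e w) * (N * ((∑ j, d j w) + e w)) ^ n := by
      refine mul_le_mul (by linarith [hS0 w])
        (pow_le_pow_left₀ (add_nonneg hT0 (he w)) hT n)
        (pow_nonneg (add_nonneg hT0 (he w)) n) (hG0 w)
    have h4 : ((n : ℝ) + 1) * (e w * ((∑ i, d i w * |x i|) + e w) ^ n)
        ≤ (n + 1) * (((∑ j, d j w) + e w) * (N * ((∑ j, d j w) + e w)) ^ n) :=
      mul_le_mul_of_nonneg_left h3 (by positivity)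
    have h5 : ((n : ℝ) + 1) * (((∑ j, d j w) + e w) * (N * ((∑ j, d j w) + e w)) ^ n)
        = ((n + 1) * N ^ n) * ((∑ j, d j w) + e w) ^ (n + 1) := by
      rw [mul_pow]; ring
    linarith
  have hi1 : Integrable (fun w => ∑ i, (d i w * (∑ j, d j w) ^ n) * |x i| ^ (n + 1)) μ :=
    integrable_finset_sum _ fun i _ => (hai i).mul_const _
  have hi2 : Integrable (fun w => ((n + 1) * N ^ n) * ((∑ j, d j w) + e w) ^ (n + 1)) μ :=
    hGi.const_mul _
  have hle := integral_mono_of_nonneg (μ := μ)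
    (Filter.Eventually.of_forall fun w => pow_nonneg (add_nonneg
      (Finset.sum_nonneg fun i _ => mul_nonneg (hd i w) (abs_nonneg (x i))) (he w)) (n + 1))
    (hi1.add hi2) (Filter.Eventually.of_forall hpt)
  refine hle.trans ?_
  have heq := integral_add hi1 hi2
  simp only [Pi.add_apply]
  rw [heq, integral_finset_sum _ fun i _ => (hai i).mul_const _, integral_const_mul]
  simp only [integral_mul_const]
  rw [← hI, ← hNQ]
  have h6 : (n + 1) * I ≤ N * ε := by
    rw [div_lt_iff₀ hε] at hN2; exact hN2.le
  have h7 := mul_le_mul_of_nonneg_right h6 (show 0 ≤ N ^ n by positivity)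
  have h8 : N * ε * N ^ n = ε * N ^ (n + 1) := by ring
  have h9 : ((n : ℝ) + 1) * N ^ n * I = (n + 1) * I * N ^ n := by ring
  linarith

/-- Let `κ ∈ {2,3,4,…}` and let `η` be a real random variable with `E|η|^κ < ∞`. For
reals `α_i`, `ω > 0`, nonnegative `β_{i+}, β_{i−}`, set
`δ_i = max{|α_i + β_{i+}η|, |α_i − β_{i−}η|}` and `a_i = E[δ_i (Σ_j δ_j)^{κ−1}]`.
Then for every `ε > 0` there is `L > 0` such that for all `x` with `‖x‖_κ > L`,
`E[(Σ_i δ_i |x_i| + ω|η|)^κ] ≤ Σ_i a_i |x_i|^κ + ε ‖x‖_κ^κ`. -/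
theorem expectation_pow_le_eventually
    {Ω : Type*} [MeasurableSpace Ω] (μ : Measure Ω) [IsProbabilityMeasure μ]
    (κ : ℕ) (hκ : 2 ≤ κ)
    (η : Ω → ℝ) (hmeas : Measurable η)
    (hmom : Integrable (fun ω' => |η ω'| ^ κ) μ)
    (p : ℕ) (α : Fin p → ℝ) (ω : ℝ) (hω : 0 < ω)
    (βp βm : Fin p → ℝ) (hβp : ∀ i, 0 ≤ βp i) (hβm : ∀ i, 0 ≤ βm i) :
    ∀ ε > (0 : ℝ), ∃ L > (0 : ℝ), ∀ x : Fin p → ℝ,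
      L < (∑ i, |x i| ^ κ) ^ ((1 : ℝ) / κ) →
      ∫ ω', ((∑ i, max |α i + βp i * η ω'| |α i - βm i * η ω'| * |x i|)
          + ω * |η ω'|) ^ κ ∂μ ≤
        (∑ i, (∫ ω', max |α i + βp i * η ω'| |α i - βm i * η ω'|
            * (∑ j, max |α j + βp j * η ω'| |α j - βm j * η ω'|) ^ (κ - 1) ∂μ)
              * |x i| ^ κ)
          + ε * ∑ i, |x i| ^ κ := by
  have hη : MemLp η κ μ := by
    rw [← integrable_norm_rpow_iff hmeas.aestronglyMeasurable (by simp; omega) (by simp)]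
    simpa using hmom
  refine helper_main μ κ hκ p (fun i w => max |α i + βp i * η w| |α i - βm i * η w|)
    (fun w => ω * |η w|) (fun i w => le_max_of_le_left (abs_nonneg _))
    (fun w => mul_nonneg hω.le (abs_nonneg _)) (fun i => ?_) (hη.abs.const_mul ω)
  exact MemLp.sup ((memLp_const (α i)).add (hη.const_mul (βp i))).abs
    ((memLp_const (α i)).sub (hη.const_mul (βm i))).abs
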